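/- arXiv:1212.2080 — 5 statements merged into one kernel-verified Lean document; each statement's English description precedes it below -/
import Mathlib

section
/- Let n, d ≥ 1 and let S be a collection of (n,d)-types that is closed under comparable intersections, i.e. whenever A, B ∈ S are such that for every i ∈ [n] either A_i ⊆ B_i or B_i ⊆ A_i, the type (A_1 ∩ B_1, …, A_n ∩ B_n) also belongs to S. Then S satisfies the elimination property — for all A, B ∈ S and every j ∈ [n] there exists C ∈ S with C_j = A_j ∪ B_j and C_k ∈ {A_k, B_k, A_k ∪ B_k} for all k ∈ [n] — if and only if for all A, B ∈ S the combinatorial convex hull S_{AB} is connected. -/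
/-- An `(n,d)`-type is an `n`-tuple of nonempty subsets of `[d]`, modelled as
`A : Fin n → Finset (Fin d)` with all entries nonempty. -/
def IsNDType {n d : ℕ} (A : Fin n → Finset (Fin d)) : Prop :=
  ∀ i, (A i).Nonempty

/-- Two types are incident if one is an entrywise subset of the other. -/
def Incident {n d : ℕ} (X Y : Fin n → Finset (Fin d)) : Prop :=
  (∀ i, X i ⊆ Y i) ∨ (∀ i, Y i ⊆ X i)

/-- The combinatorial convex hull `S_{AB}` of two types within a collection `S`. -/
def Hull {n d : ℕ} (S : Set (Fin n → Finset (Fin d)))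
    (A B : Fin n → Finset (Fin d)) : Set (Fin n → Finset (Fin d)) :=
  {C | C ∈ S ∧ ∀ i, C i = A i ∨ C i = B i ∨ C i = A i ∪ B i}

/-- `X` and `Y` are joined by a finite sequence of types in `S` in which consecutive
types are incident. -/
def ConnectedIn {n d : ℕ} (S : Set (Fin n → Finset (Fin d)))
    (X Y : Fin n → Finset (Fin d)) : Prop :=
  Relation.ReflTransGen (fun U V => U ∈ S ∧ V ∈ S ∧ Incident U V) X Y

theorem hull_mono {n d : ℕ} {S : Set (Fin n → Finset (Fin d))}
    {A B X Y : Fin n → Finset (Fin d)} (hX : X ∈ Hull S A B) (hY : Y ∈ Hull S A B) :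
    Hull S X Y ⊆ Hull S A B := by
  rintro C ⟨hC, h⟩
  refine ⟨hC, fun i => ?_⟩
  have e1 : A i ∪ (A i ∪ B i) = A i ∪ B i := by ext; simp
  have e2 : (A i ∪ B i) ∪ A i = A i ∪ B i := by ext; simp; tauto
  have e3 : B i ∪ (A i ∪ B i) = A i ∪ B i := by ext; simp; tauto
  have e4 : (A i ∪ B i) ∪ B i = A i ∪ B i := by ext; simp
  have e5 : B i ∪ A i = A i ∪ B i := Finset.union_comm _ _
  rcases hX.2 i with hx | hx | hx <;> rcases hY.2 i with hy | hy | hy <;>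
    rcases h i with h | h | h <;> rw [h] <;> simp [hx, hy, e1, e2, e3, e4, e5]

theorem conn_mono {n d : ℕ} {S T : Set (Fin n → Finset (Fin d))} (hST : S ⊆ T)
    {X Y : Fin n → Finset (Fin d)} (h : ConnectedIn S X Y) : ConnectedIn T X Y :=
  Relation.ReflTransGen.mono (fun _ _ h => ⟨hST h.1, hST h.2.1, h.2.2⟩) X Y h

theorem conn_aux {n d : ℕ} (S : Set (Fin n → Finset (Fin d)))
    (hclosed : ∀ A ∈ S, ∀ B ∈ S,
      (∀ i, A i ⊆ B i ∨ B i ⊆ A i) → (fun i => A i ∩ B i) ∈ S)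
    (hel : ∀ A ∈ S, ∀ B ∈ S, ∀ j : Fin n, ∃ C ∈ S, C j = A j ∪ B j ∧
        ∀ k, C k = A k ∨ C k = B k ∨ C k = A k ∪ B k) (m : ℕ) :
    ∀ X ∈ S, ∀ Y ∈ S,
      (Finset.univ.filter fun i => ¬ (X i ⊆ Y i ∨ Y i ⊆ X i)).card ≤ m →
      ConnectedIn (Hull S X Y) X Y := by
  induction m with
  | zero =>
    intro X hX Y hY hc
    have hcmp : ∀ i, X i ⊆ Y i ∨ Y i ⊆ X i := by
      intro i
      have h0 := Finset.card_eq_zero.1 (Nat.le_zero.1 hc)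
      by_contra hi
      have : i ∈ (Finset.univ.filter fun i => ¬ (X i ⊆ Y i ∨ Y i ⊆ X i)) := by
        simpa using hi
      rw [h0] at this
      simp at this
    have hXH : X ∈ Hull S X Y := ⟨hX, fun i => Or.inl rfl⟩
    have hYH : Y ∈ Hull S X Y := ⟨hY, fun i => Or.inr (Or.inl rfl)⟩
    have hZH : (fun i => X i ∩ Y i) ∈ Hull S X Y := by
      refine ⟨hclosed X hX Y hY hcmp, fun i => ?_⟩
      rcases hcmp i with h | h
      · exact Or.inl (Finset.inter_eq_left.2 h)
      · exact Or.inr (Or.inl (Finset.inter_eq_right.2 h))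
    refine Relation.ReflTransGen.tail (Relation.ReflTransGen.single
      ⟨hXH, hZH, Or.inr fun i => Finset.inter_subset_left⟩)
      ⟨hZH, hYH, Or.inl fun i => Finset.inter_subset_right⟩
  | succ m ih =>
    intro X hX Y hY hc
    by_cases hcmp : ∀ i, X i ⊆ Y i ∨ Y i ⊆ X i
    · apply ih X hX Y hY
      rw [Finset.filter_false_of_mem (fun i _ => not_not.2 (hcmp i))]
      simp
    · obtain ⟨j, hj⟩ := not_forall.1 hcmp
      obtain ⟨C, hC, hCj, hCk⟩ := hel X hX Y hY j
      have hXH : X ∈ Hull S X Y := ⟨hX, fun i => Or.inl rfl⟩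
      have hYH : Y ∈ Hull S X Y := ⟨hY, fun i => Or.inr (Or.inl rfl)⟩
      have hCH : C ∈ Hull S X Y := ⟨hC, hCk⟩
      have c1 : ConnectedIn (Hull S X C) X C := by
        apply ih X hX C hC
        refine Nat.le_of_lt_succ (lt_of_lt_of_le (Finset.card_lt_card ?_) hc)
        refine (Finset.ssubset_iff_of_subset ?_).2 ⟨j, by simpa using hj, by simp [hCj]⟩
        intro i hi
        simp only [Finset.mem_filter, Finset.mem_univ, true_and] at hi ⊢
        rcases hCk i with h | h | h <;> simp_all
      have c2 : ConnectedIn (Hull S C Y) C Y := by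
        apply ih C hC Y hY
        refine Nat.le_of_lt_succ (lt_of_lt_of_le (Finset.card_lt_card ?_) hc)
        refine (Finset.ssubset_iff_of_subset ?_).2 ⟨j, by simpa using hj, by simp [hCj]⟩
        intro i hi
        simp only [Finset.mem_filter, Finset.mem_univ, true_and] at hi ⊢
        rcases hCk i with h | h | h <;> simp_all
      exact Relation.ReflTransGen.trans (conn_mono (hull_mono hXH hCH) c1)
        (conn_mono (hull_mono hCH hYH) c2)

theorem stmt_0 (n d : ℕ) (hn : 1 ≤ n) (hd : 1 ≤ d)
    (S : Set (Fin n → Finset (Fin d)))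
    (htypes : ∀ A ∈ S, IsNDType A)
    (hclosed : ∀ A ∈ S, ∀ B ∈ S,
      (∀ i, A i ⊆ B i ∨ B i ⊆ A i) → (fun i => A i ∩ B i) ∈ S) :
    (∀ A ∈ S, ∀ B ∈ S, ∀ j : Fin n, ∃ C ∈ S, C j = A j ∪ B j ∧
        ∀ k, C k = A k ∨ C k = B k ∨ C k = A k ∪ B k)
    ↔ (∀ A ∈ S, ∀ B ∈ S, ∀ X ∈ Hull S A B, ∀ Y ∈ Hull S A B,
        ConnectedIn (Hull S A B) X Y) := by
  constructor
  · intro hel A _ B _ X hX Y hY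
    exact conn_mono (hull_mono hX hY) (conn_aux S hclosed hel _ X hX.1 Y hY.1 le_rfl)
  · intro hcon A hA B hB j
    by_cases h1 : A j ⊆ B j
    · exact ⟨B, hB, (Finset.union_eq_right.2 h1).symm, fun k => Or.inr (Or.inl rfl)⟩
    by_cases h2 : B j ⊆ A j
    · exact ⟨A, hA, (Finset.union_eq_left.2 h2).symm, fun k => Or.inl rfl⟩
    by_contra hno
    have hAH : A ∈ Hull S A B := ⟨hA, fun i => Or.inl rfl⟩
    have hBH : B ∈ Hull S A B := ⟨hB, fun i => Or.inr (Or.inl rfl)⟩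
    have key : ∀ Z, ConnectedIn (Hull S A B) A Z → Z j = A j := by
      intro Z hZ
      induction hZ with
      | refl => rfl
      | tail _ hs ih =>
        obtain ⟨_, hV, hi⟩ := hs
        rcases hV.2 j with h | h | h
        · exact h
        · rcases hi with hi | hi
          · have := hi j
            rw [ih, h] at this
            exact absurd this h1
          · have := hi j
            rw [ih, h] at this
            exact absurd this h2
        · exact absurd ⟨_, hV.1, h, hV.2⟩ hno
    have := key B (hcon A hA B hB A hAH B hBH)
    exact h1 this.symm.subset
end

section
/- Let A, B, C be (n,d)-types such that C_k ∈ {A_k, B_k, A_k ∪ B_k} for all k ∈ [n] and C_j = A_j ∪ B_j for a fixed j ∈ [n]. Define dist(A,B) = {i ∈ [n] : A_i ⊄ B_i and B_i ⊄ A_i}. Then dist(A,C) ⊆ dist(A,B) \ {j} and dist(B,C) ⊆ dist(A,B) \ {j}; in particular |dist(A,C)| ≤ |dist(A,B)| − 1 and |dist(B,C)| ≤ |dist(A,B)| − 1 whenever j ∈ dist(A,B). -/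
/-- `dist(A,B)` is the set of positions where the entries of `A` and `B` are
incomparable. -/
def typeDist {n d : ℕ} (A B : Fin n → Finset (Fin d)) : Finset (Fin n) :=
  Finset.univ.filter (fun i => ¬ A i ⊆ B i ∧ ¬ B i ⊆ A i)

theorem stmt_1 {n d : ℕ} (A B C : Fin n → Finset (Fin d)) (j : Fin n)
    (hA : ∀ i, (A i).Nonempty) (hB : ∀ i, (B i).Nonempty) (hC : ∀ i, (C i).Nonempty)
    (hCk : ∀ k, C k = A k ∨ C k = B k ∨ C k = A k ∪ B k)
    (hCj : C j = A j ∪ B j) :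
    typeDist A C ⊆ typeDist A B \ {j} ∧
    typeDist B C ⊆ typeDist A B \ {j} ∧
    (j ∈ typeDist A B →
      (typeDist A C).card ≤ (typeDist A B).card - 1 ∧
      (typeDist B C).card ≤ (typeDist A B).card - 1) := by
  have h1 : typeDist A C ⊆ typeDist A B \ {j} := by
    intro i hi
    simp only [typeDist, Finset.mem_filter, Finset.mem_univ, true_and, Finset.mem_sdiff,
      Finset.mem_singleton] at hi ⊢
    refine ⟨?_, ?_⟩
    · rcases hCk i with h | h | h <;> rw [h] at hi
      · exact absurd (Finset.Subset.refl _) hi.1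
      · exact hi
      · exact absurd Finset.subset_union_left hi.1
    · rintro rfl
      rw [hCj] at hi
      exact hi.1 Finset.subset_union_left
  have h2 : typeDist B C ⊆ typeDist A B \ {j} := by
    intro i hi
    simp only [typeDist, Finset.mem_filter, Finset.mem_univ, true_and, Finset.mem_sdiff,
      Finset.mem_singleton] at hi ⊢
    refine ⟨?_, ?_⟩
    · rcases hCk i with h | h | h <;> rw [h] at hi
      · exact hi.symm
      · exact absurd (Finset.Subset.refl _) hi.1
      · exact absurd Finset.subset_union_right hi.1
    · rintro rfl
      rw [hCj] at hi
      exact hi.1 Finset.subset_union_right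
  refine ⟨h1, h2, fun hj => ?_⟩
  have h3 : (typeDist A B \ {j}).card = (typeDist A B).card - 1 := by
    rw [Finset.sdiff_singleton_eq_erase, Finset.card_erase_of_mem hj]
  exact ⟨h3 ▸ Finset.card_le_card h1, h3 ▸ Finset.card_le_card h2⟩
end

section
/- Let d ≥ 2, let p ∈ ℝ^d have pairwise distinct coordinates, let i ∈ [d], and let J be a nonempty subset of [d]. Then T_J ∩ H_{i,p}^+ ≠ ∅ if and only if p_j < p_i for every j ∈ J \ {i}. -/
/-- `m(x) = min_l x_l`, the minimum coordinate of `x`. -/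
noncomputable def minCoord {d : ℕ} (x : Fin d → ℝ) : ℝ := sInf (Set.range x)

/-- `T_J`: the set of points of type `J` with respect to the tropical (min-plus)
hyperplane with apex `0`. -/
noncomputable def tropType {d : ℕ} (J : Finset (Fin d)) : Set (Fin d → ℝ) :=
  {x | {k | x k = minCoord x} = (J : Set (Fin d))}

/-- `H_{i,p}^+`: the open sector of the tropical hyperplane with apex `p`
corresponding to coordinate `i`. -/
def openSector {d : ℕ} (i : Fin d) (p : Fin d → ℝ) : Set (Fin d → ℝ) :=
  {x | ∀ j, j ≠ i → x i - p i < x j - p j}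

theorem stmt_7 {d : ℕ} (hd : 2 ≤ d) (p : Fin d → ℝ)
    (hp : Function.Injective p) (i : Fin d) (J : Finset (Fin d)) (hJ : J.Nonempty) :
    (tropType J ∩ openSector i p).Nonempty ↔ ∀ j ∈ J, j ≠ i → p j < p i := by
  have hmin : ∀ (x : Fin d → ℝ) (k : Fin d), minCoord x ≤ x k := fun x k =>
    csInf_le (Set.finite_range x).bddBelow ⟨k, rfl⟩
  constructor
  · rintro ⟨x, hx, hs⟩ j hj hji
    have h1 : x j = minCoord x := by
      have : j ∈ {k | x k = minCoord x} := by
        rw [show {k | x k = minCoord x} = (J : Set (Fin d)) from hx]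
        exact hj
      exact this
    have h2 := hmin x i
    have h3 := hs j hji
    linarith
  · intro h
    obtain ⟨ε, hε, hεJ⟩ : ∃ ε : ℝ, 0 < ε ∧ ∀ j ∈ J, j ≠ i → ε < p i - p j := by
      have h1 : ∀ᶠ ε in nhdsWithin (0 : ℝ) (Set.Ioi 0), ∀ j ∈ J, j ≠ i → ε < p i - p j := by
        rw [Filter.eventually_all_finset]
        intro j hj
        by_cases hji : j = i
        · simp [hji]
        · have h0 : (0 : ℝ) < p i - p j := by linarith [h j hj hji]
          filter_upwards [nhdsWithin_le_nhds (Iio_mem_nhds h0)] with ε hε _ using hε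
      obtain ⟨ε, h2, h3⟩ := (h1.and self_mem_nhdsWithin).exists
      exact ⟨ε, h3, h2⟩
    let x : Fin d → ℝ := fun k =>
      if k ∈ J then 0 else if k = i then ε else 1 + ε + |p k - p i|
    have hxJ : ∀ k, k ∈ J → x k = 0 := fun k hk => by simp [x, hk]
    have hxi : i ∉ J → x i = ε := fun hk => by simp [x, hk]
    have hxo : ∀ k, k ∉ J → k ≠ i → x k = 1 + ε + |p k - p i| := fun k hk hki => by
      simp [x, hk, hki]
    have hpos : ∀ k, k ∉ J → 0 < x k := by
      intro k hk
      by_cases hki : k = i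
      · subst hki; rw [hxi hk]; exact hε
      · rw [hxo k hk hki]; positivity
    have hm : minCoord x = 0 := by
      obtain ⟨j, hj⟩ := hJ
      apply le_antisymm
      · rw [← hxJ j hj]; exact hmin x j
      · refine le_csInf ⟨x j, j, rfl⟩ ?_
        rintro _ ⟨k, rfl⟩
        by_cases hk : k ∈ J
        · exact (hxJ k hk).ge
        · exact (hpos k hk).le
    refine ⟨x, ?_, ?_⟩
    · show {k | x k = minCoord x} = (J : Set (Fin d))
      ext k
      rw [hm]
      constructor
      · intro hk
        by_contra hkJ
        exact (hpos k hkJ).ne' hk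
      · exact fun hk => hxJ k hk
    · intro j hji
      have hile : x i ≤ ε := by
        by_cases hi : i ∈ J
        · rw [hxJ i hi]; exact hε.le
        · exact (hxi hi).le
      by_cases hj : j ∈ J
      · rw [hxJ j hj]
        linarith [hεJ j hj hji]
      · rw [hxo j hj hji]
        linarith [le_abs_self (p j - p i)]
end

section
/- Let d ≥ 2 and let ≺ be a linear order on [d]. For i ∈ [d] define C(i,≺) = {J ⊆ [d] : J ≠ ∅, i ∈ J, and J ⊆ {i} ∪ {q ∈ [d] : q ≺ i}}, and for L ⊆ [d] define C(L,≺) = ⋃_{i∈L} C(i,≺). Then for all nonempty proper subsets I, J of [d] and every nonempty K ⊆ [d] with K ∉ {I, J, I ∪ J}, there exist a nonempty subset L ⊆ [d] and a linear order ≺ on [d] such that I ∈ C(L,≺), J ∈ C(L,≺), I ∪ J ∈ C(L,≺), and K ∉ C(L,≺). -/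
/-- `C(i,≺)`: the nonempty subsets `J` of `[d]` with `i ∈ J` and
`J ⊆ {i} ∪ {q : q ≺ i}`. -/
def sectorTypes {d : ℕ} (i : Fin d) (lt : Fin d → Fin d → Prop) :
    Set (Finset (Fin d)) :=
  {J | J.Nonempty ∧ i ∈ J ∧ ∀ q ∈ J, q ≠ i → lt q i}

/-- `C(L,≺) = ⋃_{i ∈ L} C(i,≺)`. -/
def halfspaceTypes {d : ℕ} (L : Finset (Fin d)) (lt : Fin d → Fin d → Prop) :
    Set (Finset (Fin d)) :=
  ⋃ i ∈ L, sectorTypes i lt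

theorem exists_rank {d : ℕ} (a b : Fin d) : ∃ f : Fin d → ℕ, Function.Injective f ∧
    (∀ x, x ≠ a → x ≠ b → f x < f b) ∧ (∀ x, x ≠ a → f x < f a) := by
  refine ⟨fun x => if x = a then d + 1 else if x = b then d else x.val, ?_, ?_, ?_⟩
  · intro x y h
    have := x.isLt
    have := y.isLt
    simp only at h
    ext
    split_ifs at h <;> omega
  · intro x h1 h2
    have := x.isLt
    simp only [h1, h2, if_false, if_true]
    split_ifs <;> omega
  · intro x h1
    have := x.isLt
    simp only [h1, if_false, if_true]
    split_ifs <;> omega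

theorem mem_half {d : ℕ} (f : Fin d → ℕ) (hf : Function.Injective f) (m : Fin d)
    (I : Finset (Fin d)) (hI : I.Nonempty) (h : m ∉ I ∨ ∃ x ∈ I, f m < f x) :
    I ∈ halfspaceTypes (Finset.univ.erase m) (fun x y => f x < f y) := by
  obtain ⟨i, hi, hmax⟩ := I.exists_max_image f hI
  simp only [halfspaceTypes, sectorTypes, Set.mem_iUnion, Set.mem_setOf_eq]
  refine ⟨i, ?_, hI, hi, fun q hq hne => lt_of_le_of_ne (hmax q hq) (fun e => hne (hf e))⟩
  simp only [Finset.mem_erase, Finset.mem_univ, and_true]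
  rintro rfl
  rcases h with h | ⟨x, hx, h⟩
  · exact h hi
  · exact absurd (hmax x hx) (by omega)

theorem core {d : ℕ} (f : Fin d → ℕ) (hf : Function.Injective f) (I J K : Finset (Fin d))
    (hI : I.Nonempty) (hJ : J.Nonempty) (m : Fin d) (hm : m ∈ K) (hmK : ∀ x ∈ K, f x ≤ f m)
    (h1 : m ∉ I ∨ ∃ x ∈ I, f m < f x) (h2 : m ∉ J ∨ ∃ x ∈ J, f m < f x) :
    ∃ (L : Finset (Fin d)) (lt : Fin d → Fin d → Prop),
      L.Nonempty ∧ IsStrictTotalOrder (Fin d) lt ∧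
      I ∈ halfspaceTypes L lt ∧ J ∈ halfspaceTypes L lt ∧
      I ∪ J ∈ halfspaceTypes L lt ∧ K ∉ halfspaceTypes L lt := by
  have hI2 := mem_half f hf m I hI h1
  refine ⟨Finset.univ.erase m, fun x y => f x < f y, ?_, ?_, hI2, mem_half f hf m J hJ h2,
    mem_half f hf m _ (hI.mono Finset.subset_union_left) ?_, ?_⟩
  · simp only [halfspaceTypes, Set.mem_iUnion] at hI2
    obtain ⟨i, hi, _⟩ := hI2
    exact ⟨i, hi⟩
  · exact { trichotomous := fun x y h h' => hf (by omega)
            irrefl := fun x => lt_irrefl _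
            trans := fun x y z h h' => lt_trans h h' }
  · simp only [Finset.mem_union]
    grind
  · simp only [halfspaceTypes, sectorTypes, Set.mem_iUnion, Set.mem_setOf_eq]
    rintro ⟨i, hi, _, hiK, h⟩
    have hne : m ≠ i := by
      rintro rfl
      simp at hi
    have := h m hm hne
    have := hmK i hiK
    omega

theorem core_sub {d : ℕ} (I J K : Finset (Fin d))
    (hI : I.Nonempty) (hJ : J.Nonempty) (hKI : K ≠ I) (hKIJ : K ≠ I ∪ J)
    (hK : K ⊆ I ∪ J) (hs : I ⊆ K) :
    ∃ (L : Finset (Fin d)) (lt : Fin d → Fin d → Prop),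
      L.Nonempty ∧ IsStrictTotalOrder (Fin d) lt ∧
      I ∈ halfspaceTypes L lt ∧ J ∈ halfspaceTypes L lt ∧
      I ∪ J ∈ halfspaceTypes L lt ∧ K ∉ halfspaceTypes L lt := by
  obtain ⟨k, hk, hkI⟩ := Finset.not_subset.1 (fun h => hKI (Finset.Subset.antisymm h hs))
  obtain ⟨x, hx, hxK⟩ := Finset.not_subset.1 (fun h => hKIJ (Finset.Subset.antisymm hK h))
  have hxJ : x ∈ J := (Finset.mem_union.1 hx).resolve_left (fun h => hxK (hs h))
  obtain ⟨f, hf, hb, ha⟩ := exists_rank x k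
  have hkx : k ≠ x := fun h => hxK (h ▸ hk)
  refine core f hf I J K hI hJ k hk (fun y hy => ?_) (Or.inl hkI) (Or.inr ⟨x, hxJ, ha k hkx⟩)
  by_cases h : y = k
  · rw [h]
  · exact (hb y (fun e => hxK (e ▸ hy)) h).le

theorem stmt_10 {d : ℕ} (hd : 2 ≤ d)
    (I J K : Finset (Fin d))
    (hI : I.Nonempty) (hI' : I ≠ Finset.univ)
    (hJ : J.Nonempty) (hJ' : J ≠ Finset.univ)
    (hK : K.Nonempty) (hKI : K ≠ I) (hKJ : K ≠ J) (hKIJ : K ≠ I ∪ J) :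
    ∃ (L : Finset (Fin d)) (lt : Fin d → Fin d → Prop),
      L.Nonempty ∧ IsStrictTotalOrder (Fin d) lt ∧
      I ∈ halfspaceTypes L lt ∧ J ∈ halfspaceTypes L lt ∧
      I ∪ J ∈ halfspaceTypes L lt ∧ K ∉ halfspaceTypes L lt := by
  by_cases hs : K ⊆ I ∪ J
  · by_cases h1 : I ⊆ K
    · exact core_sub I J K hI hJ hKI hKIJ hs h1
    by_cases h2 : J ⊆ K
    · obtain ⟨L, lt, a, b, c, e, g, h⟩ := core_sub J I K hJ hI hKJ
        (by rwa [Finset.union_comm]) (by rwa [Finset.union_comm]) h2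
      exact ⟨L, lt, a, b, e, c, by rwa [Finset.union_comm], h⟩
    obtain ⟨i, hi, hiK⟩ := Finset.not_subset.1 h1
    obtain ⟨j, hj, hjK⟩ := Finset.not_subset.1 h2
    obtain ⟨f, hf, hb, ha⟩ := exists_rank i j
    obtain ⟨m, hm, hmax⟩ := K.exists_max_image f hK
    have hmi : m ≠ i := fun e => hiK (e ▸ hm)
    have hmj : m ≠ j := fun e => hjK (e ▸ hm)
    exact core f hf I J K hI hJ m hm hmax (Or.inr ⟨i, hi, ha m hmi⟩) (Or.inr ⟨j, hj, hb m hmi hmj⟩)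
  · obtain ⟨k, hk, hkn⟩ := Finset.not_subset.1 hs
    obtain ⟨f, hf, hb, ha⟩ := exists_rank k k
    rw [Finset.mem_union, not_or] at hkn
    refine core f hf I J K hI hJ k hk (fun y hy => ?_) (Or.inl hkn.1) (Or.inl hkn.2)
    by_cases h : y = k
    · rw [h]
    · exact (ha y h).le
end

section
/- Let d ≥ 2 and let I be a nonempty proper subset of [d]. Consider f : ℝ^d → ℝ given by f(x) = min_{i∈I} x_i − min_{k∉I} x_k, and the open tropical halfspace U = {x ∈ ℝ^d : f(x) < 0}. Then the topological frontier of U equals W = {x ∈ ℝ^d : min_{i∈I} x_i = min_{k∉I} x_k}, the complement ℝ^d \ W has exactly the two connected components U = {f < 0} and {f > 0}, both nonempty and open, and W is homeomorphic to ℝ^{d−1}. -/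
theorem aux_inf_shift {d : ℕ} (s : Finset (Fin d)) (hs : s.Nonempty) (x : Fin d → ℝ) (t : ℝ) :
    s.inf' hs (fun i => x i + t) = s.inf' hs x + t := by
  apply le_antisymm
  · obtain ⟨i, hi, h⟩ := s.exists_mem_eq_inf' hs x
    rw [h]
    exact Finset.inf'_le (fun i => x i + t) hi
  · rw [Finset.le_inf'_iff]
    intro i hi
    have := Finset.inf'_le x hi
    linarith

theorem aux_main {d : ℕ} (I : Finset (Fin d)) (hI : I.Nonempty) (hI' : I ≠ Finset.univ)
    (f : (Fin d → ℝ) → ℝ)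
    (hf : ∀ x, f x = sInf ((fun i => x i) '' (I : Set (Fin d))) -
                    sInf ((fun k => x k) '' ((I : Set (Fin d))ᶜ))) :
    Continuous f ∧ ∀ x t, f (fun i => x i + if i ∈ I then t else 0) = f x + t := by
  have hc : (Iᶜ).Nonempty := by
    rw [Finset.nonempty_iff_ne_empty]
    simpa [Finset.compl_eq_empty_iff] using hI'
  have e : f = fun x => I.inf' hI x - (Iᶜ).inf' hc x := by
    funext x
    rw [hf, Finset.inf'_eq_csInf_image, Finset.inf'_eq_csInf_image, Finset.coe_compl]
  subst e
  constructor
  · apply Continuous.sub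
    · exact Continuous.finset_inf'_apply hI (fun i _ => continuous_apply i)
    · exact Continuous.finset_inf'_apply hc (fun i _ => continuous_apply i)
  · intro x t
    have h1 : I.inf' hI (fun i => x i + if i ∈ I then t else 0) = I.inf' hI x + t := by
      rw [← aux_inf_shift]
      exact Finset.inf'_congr hI rfl (fun i hi => by simp [hi])
    have h2 : (Iᶜ).inf' hc (fun i => x i + if i ∈ I then t else 0) = (Iᶜ).inf' hc x :=
      Finset.inf'_congr hc rfl (fun i hi => by
        have : i ∉ I := by simpa using hi
        simp [this])
    simp only [h1, h2]
    ring


theorem stmt_12 {d : ℕ} (hd : 2 ≤ d) (I : Finset (Fin d))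
    (hI : I.Nonempty) (hI' : I ≠ Finset.univ)
    (f : (Fin d → ℝ) → ℝ)
    (hf : ∀ x, f x = sInf ((fun i => x i) '' (I : Set (Fin d))) -
                    sInf ((fun k => x k) '' ((I : Set (Fin d))ᶜ)))
    (U W : Set (Fin d → ℝ))
    (hU : U = {x | f x < 0})
    (hW : W = {x | sInf ((fun i => x i) '' (I : Set (Fin d))) =
                   sInf ((fun k => x k) '' ((I : Set (Fin d))ᶜ))}) :
    frontier U = W ∧
    Wᶜ = U ∪ {x | 0 < f x} ∧
    U.Nonempty ∧ {x | 0 < f x}.Nonempty ∧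
    IsOpen U ∧ IsOpen {x | 0 < f x} ∧
    IsConnected U ∧ IsConnected {x | 0 < f x} ∧
    Disjoint U {x | 0 < f x} ∧
    Nonempty (W ≃ₜ (Fin (d - 1) → ℝ)) := by
  obtain ⟨fc, ft⟩ := aux_main I hI hI' f hf
  have hW0 : W = {x | f x = 0} := by
    rw [hW]; ext x; simp only [Set.mem_ofPred_eq, hf, sub_eq_zero]
  clear hf hW
  subst hU hW0
  have cs : ∀ {X : Type} [TopologicalSpace X] (g : X → Fin d → ℝ) (t : X → ℝ), Continuous g →
      Continuous t → Continuous (fun z => (fun i => g z i + if i ∈ I then t z else 0)) := by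
    intro X _ g t hg ht
    refine continuous_pi fun i => ?_
    by_cases hi : i ∈ I
    · simp only [hi, if_true]; fun_prop
    · simp only [hi, if_false]; fun_prop
  have fo : IsOpenMap f := by
    apply IsOpenMap.of_sections
    intro x
    refine ⟨fun s => (fun i => x i + if i ∈ I then s - f x else 0), ?_, ?_, ?_⟩
    · exact (cs (fun _ : ℝ => x) (fun s => s - f x) (by fun_prop) (by fun_prop)).continuousAt
    · simp
    · intro s
      simp [ft]
  have conn : ∀ S : Set ℝ, IsConnected S → IsConnected (f ⁻¹' S) := by
    intro S hS
    have h := (isConnected_univ (α := Fin d → ℝ)).prod hS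
    have h2 := h.image (fun p : (Fin d → ℝ) × ℝ =>
      (fun i => p.1 i + if i ∈ I then p.2 - f p.1 else 0))
      (cs (fun p : (Fin d → ℝ) × ℝ => p.1) (fun p => p.2 - f p.1) (by fun_prop)
        (by fun_prop)).continuousOn
    convert h2 using 1
    ext x
    constructor
    · intro hx
      exact ⟨(x, f x), ⟨trivial, hx⟩, by simp⟩
    · rintro ⟨⟨y, t⟩, ⟨-, ht⟩, rfl⟩
      simpa [ft] using ht
  have c1 : IsConnected {x | f x < 0} := conn (Set.Iio 0) isConnected_Iio
  have c2 : IsConnected {x | 0 < f x} := conn (Set.Ioi 0) isConnected_Ioi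
  refine ⟨?_, ?_, c1.nonempty, c2.nonempty, isOpen_lt fc continuous_const,
    isOpen_lt continuous_const fc, c1, c2, ?_, ?_⟩
  · have := fo.preimage_frontier_eq_frontier_preimage fc (Set.Iio 0)
    rw [frontier_Iio] at this
    exact this.symm
  · ext x
    simp
  · rw [Set.disjoint_left]
    intro x hx hx'
    exact lt_asymm (show f x < 0 from hx) (show 0 < f x from hx')
  · obtain ⟨i0, hi0⟩ := hI
    have card : Fintype.card {j : Fin d // j ≠ i0} = Fintype.card (Fin (d - 1)) := by
      simp
    let e := Fintype.equivOfCardEq card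
    let ext0 : ({j : Fin d // j ≠ i0} → ℝ) → Fin d → ℝ :=
      fun y j => if h : j ≠ i0 then y ⟨j, h⟩ else 0
    have e0 : ∀ y, ext0 y i0 = 0 := fun y => by simp [ext0]
    have e1 : ∀ y j (h : j ≠ i0), ext0 y j = y ⟨j, h⟩ := fun y j h => by simp [ext0, h]
    have ec : Continuous ext0 := by
      refine continuous_pi fun j => ?_
      by_cases h : j = i0
      · subst h
        exact continuous_const.congr fun y => (e0 y).symm
      · exact (continuous_apply (⟨j, h⟩ : {j : Fin d // j ≠ i0})).congr fun y => (e1 y j h).symm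
    let H : {x | f x = 0} ≃ₜ ({j : Fin d // j ≠ i0} → ℝ) :=
      { toFun := fun x j => x.1 j.1 + if j.1 ∈ I then - x.1 i0 else 0
        invFun := fun y => ⟨fun i => ext0 y i + if i ∈ I then - f (ext0 y) else 0, by
          simp [ft]⟩
        left_inv := by
          rintro ⟨x, hx⟩
          have hx : f x = 0 := hx
          have key : ext0 (fun j => x j.1 + if j.1 ∈ I then - x i0 else 0) =
              fun i => x i + if i ∈ I then - x i0 else 0 := by
            funext j
            by_cases h : j = i0
            · subst h; simp [e0, hi0]
            · exact e1 (fun j => x j.1 + if j.1 ∈ I then - x i0 else 0) j h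
          apply Subtype.ext
          funext i
          simp only [key, ft, hx]
          by_cases h : i ∈ I <;> simp [h]
        right_inv := by
          intro y
          funext j
          simp only [e0, e1 y j.1 j.2]
          by_cases h : j.1 ∈ I <;> simp [h, hi0]
        continuous_toFun := by
          have := cs (fun x : {x | f x = 0} => x.1) (fun x => - x.1 i0) (by fun_prop)
            ((continuous_apply i0).comp continuous_subtype_val).neg
          exact continuous_pi fun j => (continuous_apply j.1).comp this
        continuous_invFun := by
          exact (cs ext0 (fun y => - f (ext0 y)) ec (by fun_prop)).subtype_mk _ }
    exact ⟨H.trans (Homeomorph.piCongrLeft (Y := fun _ => ℝ) e)⟩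
end
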